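/- arXiv:1307.5449 — 4 statements merged into one kernel-verified Lean document; each statement's English description precedes it below -/
import Mathlib

section
/- Let P and Q be probability measures on a measurable space (Ω, 𝓕) and let β ≥ 0 be a real number such that the Kullback–Leibler divergence satisfies KL(P ‖ Q) ≤ β. Then for every measurable set A ⊆ Ω, max{ P(Ω \ A), Q(A) } ≥ (1/4)·exp(−β). -/
/-!
This is the Bretagnolle–Huber argument. Write `l = log (dP/dQ)`. Jensen's inequality bounds the
Hellinger affinity below, `∫ exp (-l / 2) ∂P ≥ exp (-β / 2)`. Splitting it over `A` and `Aᶜ`,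
Cauchy–Schwarz together with `∫ x in s, exp (-l) ∂P ≤ Q s` bounds the two pieces above by
`√(Q A)` and `√(P Aᶜ)`, so that `exp (-β / 2) ≤ 2 √m` where `m` is the larger error probability.

Both inequalities are used in pointwise form: Jensen as the tangent line of `exp` at `-β / 2`, and
Cauchy–Schwarz as `2 u v y ≤ u ^ 2 y ^ 2 + v ^ 2` with the optimal weights `u`, `v` on each piece.
This makes the integrability of `exp (-l / 2)` unnecessary.
-/

open MeasureTheory

/-- The tangent line of `exp` at `-β / 2`, evaluated at `-l / 2`, combined with
`2 u v y ≤ u ^ 2 y ^ 2 + v ^ 2` for `y = exp (-l / 2)`. -/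
lemma tangent_le_weighted (β l u v : ℝ) (hu : 0 ≤ u) (hv : 0 ≤ v) :
    2 * (u * v) * (Real.exp (-β / 2) * (1 + β / 2 - l / 2))
      ≤ u ^ 2 * Real.exp (-l) + v ^ 2 := by
  have h1 : Real.exp (-β / 2) * (1 + β / 2 - l / 2) ≤ Real.exp (-l / 2) := by
    have h : Real.exp (-l / 2) = Real.exp (-β / 2) * Real.exp (β / 2 - l / 2) := by
      rw [← Real.exp_add]; congr 1; ring
    rw [h]
    have := Real.add_one_le_exp (β / 2 - l / 2)
    gcongr
    linarith
  have h2 : Real.exp (-l) = Real.exp (-l / 2) ^ 2 := by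
    rw [← Real.exp_nat_mul]; congr 1; push_cast; ring
  have h3 := mul_le_mul_of_nonneg_left h1 (by positivity : 0 ≤ 2 * (u * v))
  rw [h2]
  nlinarith [sq_nonneg (u * Real.exp (-l / 2) - v)]

/-- Localized form of the bound on the Hellinger affinity: the Jensen tangent, integrated over `s`,
is at most the weighted mean of `Q s` and `P s`. -/
lemma setIntegral_tangent_le {Ω : Type*} [MeasurableSpace Ω]
    (P Q : Measure Ω) [IsProbabilityMeasure P] [IsProbabilityMeasure Q] (hPQ : P ≪ Q)
    (hint : Integrable (llr P Q) P) (s : Set Ω) (β u v : ℝ) (hu : 0 ≤ u) (hv : 0 ≤ v) :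
    ∫ x in s, 2 * (u * v) * (Real.exp (-β / 2) * (1 + β / 2 - llr P Q x / 2)) ∂P
      ≤ u ^ 2 * Q.real s + v ^ 2 * P.real s := by
  have hr : Integrable (fun x ↦ (Q.rnDeriv P x).toReal) P := Measure.integrable_toReal_rnDeriv
  calc _ ≤ ∫ x in s, (u ^ 2 * (Q.rnDeriv P x).toReal + v ^ 2) ∂P := by
        refine integral_mono_ae ?_ ?_ (ae_restrict_of_ae ?_)
        · exact ((((integrable_const (1 + β / 2)).sub (hint.div_const 2)).const_mul
            _).const_mul _).integrableOn
        · exact ((hr.const_mul _).add (integrable_const _)).integrableOn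
        · filter_upwards [exp_neg_llr hPQ] with x hx
          rw [← hx]
          exact tangent_le_weighted β _ u v hu hv
    _ = u ^ 2 * ∫ x in s, (Q.rnDeriv P x).toReal ∂P + v ^ 2 * P.real s := by
        rw [integral_add (hr.const_mul _).integrableOn (integrable_const _),
          integral_const_mul]
        simp [mul_comm]
    _ ≤ _ := by
        gcongr
        exact Measure.setIntegral_toReal_rnDeriv_le (measure_ne_top Q s)

theorem stmt4 {Ω : Type*} [MeasurableSpace Ω]
    (P Q : Measure Ω) [IsProbabilityMeasure P] [IsProbabilityMeasure Q]
    (β : ℝ) (hβ : 0 ≤ β)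
    (hPQ : P ≪ Q)
    (hint : Integrable (llr P Q) P)
    (hKL : ∫ x, llr P Q x ∂P ≤ β)
    (A : Set Ω) (hA : MeasurableSet A) :
    (1 / 4) * Real.exp (-β) ≤ max (P Aᶜ).toReal (Q A).toReal := by
  by_contra! hlt
  obtain ⟨hP, hQ⟩ := max_lt_iff.mp hlt
  -- `k ^ 2 = exp (-β) / 4` is the value that both error probabilities are assumed to stay below;
  -- the weights `(1, k)` on `A` and `(k, 1)` on `Aᶜ` are optimal when both equal it.
  obtain ⟨k, hk⟩ : ∃ k, k = Real.exp (-β / 2) / 2 := ⟨_, rfl⟩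
  have hk0 : 0 < k := by rw [hk]; positivity
  have hexp : Real.exp (-β / 2) = 2 * k := by linarith
  have hksq : (1 / 4) * Real.exp (-β) = k ^ 2 := by
    rw [hk, div_pow, ← Real.exp_nat_mul]
    push_cast
    ring_nf
  have h1 := setIntegral_tangent_le P Q hPQ hint A β 1 k zero_le_one hk0.le
  have h2 := setIntegral_tangent_le P Q hPQ hint Aᶜ β k 1 hk0.le zero_le_one
  rw [one_mul] at h1
  rw [mul_one] at h2
  have hi : Integrable
      (fun x ↦ 2 * k * (Real.exp (-β / 2) * (1 + β / 2 - llr P Q x / 2))) P :=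
    (((integrable_const (1 + β / 2)).sub (hint.div_const 2)).const_mul _).const_mul _
  have hsum := integral_add_compl hA hi
  have hval : ∫ x, 2 * k * (Real.exp (-β / 2) * (1 + β / 2 - llr P Q x / 2)) ∂P
      = 2 * k * (2 * k * (1 + β / 2 - (∫ x, llr P Q x ∂P) / 2)) := by
    rw [integral_const_mul, integral_const_mul,
      integral_sub (integrable_const _) (hint.div_const 2), integral_div, hexp]
    simp
  have hlow : 4 * k ^ 2 ≤ 2 * k * (2 * k * (1 + β / 2 - (∫ x, llr P Q x ∂P) / 2)) := by
    nlinarith [mul_nonneg (sq_nonneg k) (sub_nonneg.mpr hKL)]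
  have hPA : k ^ 2 * P.real A ≤ k ^ 2 :=
    mul_le_of_le_one_right (sq_nonneg k) measureReal_le_one
  have hQA : k ^ 2 * Q.real Aᶜ ≤ k ^ 2 :=
    mul_le_of_le_one_right (sq_nonneg k) measureReal_le_one
  rw [hksq] at hP hQ
  change P.real Aᶜ < _ at hP
  change Q.real A < _ at hQ
  linarith
end

section
/- Let d ≥ 1, G > 0, and let f : ℝ^d → ℝ be twice continuously differentiable and convex, with its second derivative satisfying f''(x)(v, v) ≤ G·‖v‖² for all x, v ∈ ℝ^d. Then for every z ∈ ℝ^d and every h > 0, ‖ (1/(2h))·Σ_{k=1}^d ( f(z + h·e_k) − f(z − h·e_k) )·e_k − ∇f(z) ‖ ≤ G·h·√d, where e_1, …, e_d is the standard orthonormal basis and ‖·‖ is the Euclidean norm. -/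
/-!
Both one-sided remainders `f (z ± h • v) - f z ∓ h * f' z v` lie between `0` (a convex function is
above its tangent line) and `G / 2 * (h * ‖v‖) ^ 2` (the same fact for `G / 2 * t ^ 2 * ‖v‖ ^ 2`
minus the restriction of `f` to a line, which is convex because of the bound on the second
derivative). In the symmetric difference the two remainders are subtracted, so each coordinate of
the error is at most `G * h / 4` in absolute value, and a vector with `d` coordinates bounded by `c`
has Euclidean norm at most `c * √d`.
-/

open scoped BigOperators

/-- A convex function on the line is above its tangent at `0`. -/
lemma tangent_le {g : ℝ → ℝ} {g' : ℝ} (hg : ConvexOn ℝ Set.univ g) (hd : HasDerivAt g g' 0) :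
    g 0 + g' ≤ g 1 := by
  have := hg.le_slope_of_hasDerivAt (Set.mem_univ 0) (Set.mem_univ 1) one_pos hd
  simp [slope_def_field] at this
  linarith

section

variable {E : Type*} [NormedAddCommGroup E] [NormedSpace ℝ E] {f : E → ℝ}

lemma hasDerivAt_line (hf : ContDiff ℝ 2 f) (z v : E) (t : ℝ) :
    HasDerivAt (fun s : ℝ => f (z + s • v)) (fderiv ℝ f (z + t • v) v) t := by
  have h1 : HasDerivAt (fun s : ℝ => z + s • v) v t := by
    simpa using ((hasDerivAt_id t).smul_const v).const_add z
  exact ((hf.differentiable (by norm_num)) (z + t • v)).hasFDerivAt.comp_hasDerivAt t h1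

lemma hasDerivAt_line2 (hf : ContDiff ℝ 2 f) (z v : E) (t : ℝ) :
    HasDerivAt (fun s : ℝ => fderiv ℝ f (z + s • v) v)
      (fderiv ℝ (fderiv ℝ f) (z + t • v) v v) t := by
  have h1 : HasDerivAt (fun s : ℝ => z + s • v) v t := by
    simpa using ((hasDerivAt_id t).smul_const v).const_add z
  have h2 : Differentiable ℝ (fderiv ℝ f) :=
    (hf.fderiv_right (m := 1) (by norm_num)).differentiable (by norm_num)
  have h3 := (h2 (z + t • v)).hasFDerivAt.comp_hasDerivAt t h1
  simpa using h3.clm_apply (hasDerivAt_const t v)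

lemma remainder_nonneg (hf : ContDiff ℝ 2 f) (hconv : ConvexOn ℝ Set.univ f) (z v : E) :
    f z + fderiv ℝ f z v ≤ f (z + v) := by
  have hc : ConvexOn ℝ Set.univ (fun s : ℝ => f (z + s • v)) := by
    have := hconv.comp_affineMap (AffineMap.lineMap z (z + v) : ℝ →ᵃ[ℝ] E)
    simpa [Function.comp_def, AffineMap.lineMap_apply, add_comm] using this
  simpa using tangent_le hc (hasDerivAt_line hf z v 0)

lemma remainder_le (hf : ContDiff ℝ 2 f) {G : ℝ}
    (hsec : ∀ x v : E, fderiv ℝ (fderiv ℝ f) x v v ≤ G * ‖v‖ ^ 2) (z v : E) :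
    f (z + v) ≤ f z + fderiv ℝ f z v + G / 2 * ‖v‖ ^ 2 := by
  have hd1 (t : ℝ) : HasDerivAt (fun s : ℝ => G * ‖v‖ ^ 2 / 2 * s ^ 2 - f (z + s • v))
      (G * ‖v‖ ^ 2 * t - fderiv ℝ f (z + t • v) v) t := by
    refine (((hasDerivAt_pow 2 t).const_mul (G * ‖v‖ ^ 2 / 2)).fun_sub
      (hasDerivAt_line hf z v t)).congr_deriv ?_
    push_cast
    ring
  have hd2 (t : ℝ) : HasDerivAt (fun s : ℝ => G * ‖v‖ ^ 2 * s - fderiv ℝ f (z + s • v) v)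
      (G * ‖v‖ ^ 2 - fderiv ℝ (fderiv ℝ f) (z + t • v) v v) t := by
    simpa using ((hasDerivAt_id t).const_mul (G * ‖v‖ ^ 2)).fun_sub (hasDerivAt_line2 hf z v t)
  have hmono : Monotone fun s : ℝ => G * ‖v‖ ^ 2 * s - fderiv ℝ f (z + s • v) v :=
    monotone_of_deriv_nonneg (fun t => (hd2 t).differentiableAt) fun t => by
      rw [(hd2 t).deriv]
      exact sub_nonneg.2 (hsec _ _)
  have hc : ConvexOn ℝ Set.univ (fun s : ℝ => G * ‖v‖ ^ 2 / 2 * s ^ 2 - f (z + s • v)) := by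
    refine Monotone.convexOn_univ_of_deriv (fun t => (hd1 t).differentiableAt) ?_
    rwa [show deriv (fun s : ℝ => G * ‖v‖ ^ 2 / 2 * s ^ 2 - f (z + s • v)) = _ from
      funext fun t => (hd1 t).deriv]
  have := tangent_le hc (hd1 0)
  simp at this
  linarith

/-- The symmetric difference quotient along `v` approximates the directional derivative; the
remainders at `z + h • v` and `z - h • v` have the same sign, hence partly cancel. -/
lemma abs_symm_quotient_sub_le (hf : ContDiff ℝ 2 f) (hconv : ConvexOn ℝ Set.univ f) {G : ℝ}
    (hsec : ∀ x v : E, fderiv ℝ (fderiv ℝ f) x v v ≤ G * ‖v‖ ^ 2) (z v : E) (hv : ‖v‖ = 1)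
    {h : ℝ} (hh : 0 < h) :
    |1 / (2 * h) * (f (z + h • v) - f (z - h • v)) - fderiv ℝ f z v| ≤ G * h / 4 := by
  have a1 := remainder_nonneg hf hconv z (h • v)
  have a2 := remainder_nonneg hf hconv z (-(h • v))
  have b1 := remainder_le hf hsec z (h • v)
  have b2 := remainder_le hf hsec z (-(h • v))
  simp only [map_neg, map_smul, norm_neg, norm_smul, hv, smul_eq_mul, ← sub_eq_add_neg,
    Real.norm_eq_abs, abs_of_pos hh, mul_one] at a1 a2 b1 b2
  have e : 1 / (2 * h) * (f (z + h • v) - f (z - h • v)) - fderiv ℝ f z v =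
      (f (z + h • v) - f (z - h • v) - 2 * h * fderiv ℝ f z v) / (2 * h) := by
    field_simp
  rw [e, abs_div, abs_of_pos (show 0 < 2 * h by positivity), div_le_iff₀ (by positivity), abs_le]
  constructor <;> nlinarith

end

lemma norm_le_mul_sqrt {d : ℕ} (x : EuclideanSpace ℝ (Fin d)) {c : ℝ} (hc : 0 ≤ c)
    (hx : ∀ i, |x i| ≤ c) : ‖x‖ ≤ c * Real.sqrt d := by
  rw [EuclideanSpace.norm_eq, ← Real.sqrt_sq hc, ← Real.sqrt_mul (sq_nonneg c)]
  refine Real.sqrt_le_sqrt ?_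
  calc ∑ i, ‖x i‖ ^ 2 ≤ ∑ _i : Fin d, c ^ 2 :=
        Finset.sum_le_sum fun i _ => pow_le_pow_left₀ (norm_nonneg _) (hx i) 2
    _ = c ^ 2 * d := by simp [mul_comm]

theorem stmt8 {d : ℕ} (hd : 1 ≤ d) (G : ℝ) (hG : 0 < G)
    (f : EuclideanSpace ℝ (Fin d) → ℝ)
    (hf : ContDiff ℝ 2 f)
    (hconv : ConvexOn ℝ Set.univ f)
    (hsec : ∀ x v : EuclideanSpace ℝ (Fin d),
      fderiv ℝ (fderiv ℝ f) x v v ≤ G * ‖v‖ ^ 2)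
    (z : EuclideanSpace ℝ (Fin d)) (h : ℝ) (hh : 0 < h) :
    ‖(1 / (2 * h)) • (∑ k : Fin d,
        (f (z + h • EuclideanSpace.single k (1 : ℝ))
          - f (z - h • EuclideanSpace.single k (1 : ℝ))) • EuclideanSpace.single k (1 : ℝ))
      - gradient f z‖ ≤ G * h * Real.sqrt d := by
  have key : ∀ i, |((1 / (2 * h)) • (∑ k : Fin d,
        (f (z + h • EuclideanSpace.single k (1 : ℝ))
          - f (z - h • EuclideanSpace.single k (1 : ℝ))) • EuclideanSpace.single k (1 : ℝ))
      - gradient f z) i| ≤ G * h / 4 := by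
    intro i
    have hg : gradient f z i = fderiv ℝ f z (EuclideanSpace.single i 1) := by
      have h1 : inner ℝ (gradient f z) (EuclideanSpace.single i (1 : ℝ)) =
          fderiv ℝ f z (EuclideanSpace.single i 1) := by
        simp [gradient]
      rw [← h1, EuclideanSpace.inner_single_right]
      simp
    have := abs_symm_quotient_sub_le hf hconv hsec z (EuclideanSpace.single i 1) (by simp) hh
    simpa [hg, Finset.sum_apply, Pi.single_apply] using this
  refine (norm_le_mul_sqrt _ (by positivity) key).trans ?_
  gcongr
  linarith [mul_pos hG hh]
end

section
/- Let C be a real number with 0 ≤ C ≤ 1/2, and define g¹(x) = x² − x + 3/4 and g²(x) = x² − (1 + 2C)x + 3/4 + C. Then for every real x, (1/2)·( g¹(x) + g²(x) ) − (1/2)·( min_{y ∈ [0,1]} g¹(y) + min_{y ∈ [0,1]} g²(y) ) ≥ C²/4. -/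
/-!
Completing squares, `g1` and `g2` have vertices `1 / 2` and `1 / 2 + C`, both in `[0, 1]`, with
values `1 / 2` and `1 / 2 - C ^ 2`. Their average is a parabola with vertex at the midpoint
`(1 + C) / 2`, where it equals `1 / 2 - C ^ 2 / 4`. This exceeds the average `1 / 2 - C ^ 2 / 2` of
the two minima by exactly `C ^ 2 / 4`.
-/

theorem stmt13 (C : ℝ) (hC0 : 0 ≤ C) (hC : C ≤ 1 / 2)
    (g1 g2 : ℝ → ℝ)
    (hg1 : g1 = fun x => x ^ 2 - x + 3 / 4)
    (hg2 : g2 = fun x => x ^ 2 - (1 + 2 * C) * x + 3 / 4 + C)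
    (x : ℝ) :
    C ^ 2 / 4 ≤ (1 / 2) * (g1 x + g2 x)
      - (1 / 2) * (sInf (g1 '' Set.Icc (0 : ℝ) 1) + sInf (g2 '' Set.Icc (0 : ℝ) 1)) := by
  -- Only upper bounds on the two infima are needed; evaluate at the vertices `1/2` and `1/2 + C`.
  have h1 : sInf (g1 '' Set.Icc (0 : ℝ) 1) ≤ 1 / 2 := by
    refine csInf_le ⟨1 / 2, ?_⟩ ⟨1 / 2, ⟨by norm_num, by norm_num⟩, ?_⟩
    · rintro _ ⟨y, -, rfl⟩
      rw [hg1]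
      nlinarith [sq_nonneg (y - 1 / 2)]
    · rw [hg1]
      norm_num
  have h2 : sInf (g2 '' Set.Icc (0 : ℝ) 1) ≤ 1 / 2 - C ^ 2 := by
    refine csInf_le ⟨1 / 2 - C ^ 2, ?_⟩ ⟨1 / 2 + C, ⟨by linarith, by linarith⟩, ?_⟩
    · rintro _ ⟨y, -, rfl⟩
      rw [hg2]
      nlinarith [sq_nonneg (y - (1 / 2 + C))]
    · rw [hg2]
      ring
  -- The average of the two costs is `(x - (1 + C) / 2) ^ 2 + 1 / 2 - C ^ 2 / 4`.
  have h3 : 1 / 2 - C ^ 2 / 4 ≤ (1 / 2) * (g1 x + g2 x) := by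
    rw [hg1, hg2]
    nlinarith [sq_nonneg (x - (1 + C) / 2)]
  linarith
end

section
/- Let δ be a real number with 0 < δ < 1/4 and define f¹, f² : ℝ → ℝ by f¹(x) = 1/2 + δ − 2δx + (x − 1/4)²·1{x < 1/4} + (x − 3/4)²·1{x > 3/4} and f²(x) = 1/2 − δ + 2δx + (x − 1/4)²·1{x < 1/4} + (x − 3/4)²·1{x > 3/4}. Then: (i) f¹ and f² are convex on ℝ; (ii) |f¹(x) − f²(x)| ≤ 2δ for all x ∈ [0,1], with |f¹(0) − f²(0)| = 2δ; (iii) f¹ attains its minimum over [0,1] at 3/4 + δ and f² at 1/4 − δ, both with minimal value 1/2 − δ/2 − δ², and f¹(1/2) − min_{[0,1]} f¹ = f²(1/2) − min_{[0,1]} f² = δ/2 + δ² ≥ δ/4. -/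
/-!
Both functions are an affine function plus the two one-sided quadratics `(a - x)₊²` at `a = 1/4`
and `(x - a)₊²` at `a = 3/4`. Each of these is the square of a nonnegative convex function, hence
convex. The quadratic terms cancel in `f1 x - f2 x = 2 * δ * (1 - 2 * x)`, which gives the
uniform distance on `[0, 1]`. For the minimizers, `f1` is at least its decreasing affine part up
to `3/4`, and beyond `3/4` completing the square gives
`f1 x = (x - (3/4 + δ))² + 1/2 - δ/2 - δ²`; the case of `f2` is the mirror image.
-/

lemma convexOn_sq_left (a : ℝ) :
    ConvexOn ℝ Set.univ (fun x : ℝ => if x < a then (x - a) ^ 2 else 0) := by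
  have h : ConvexOn ℝ Set.univ (fun x : ℝ => max (a - x) 0) :=
    ((convexOn_const a convex_univ).sub (concaveOn_id convex_univ)).sup
      (convexOn_const 0 convex_univ)
  have h2 := h.pow (fun x _ => le_max_right _ _) 2
  refine h2.congr fun x _ => ?_
  simp only [Pi.pow_apply]
  split_ifs with hx
  · rw [max_eq_left (by linarith)]; ring
  · rw [max_eq_right (by linarith)]; ring

lemma convexOn_sq_right (a : ℝ) :
    ConvexOn ℝ Set.univ (fun x : ℝ => if x > a then (x - a) ^ 2 else 0) := by
  have h : ConvexOn ℝ Set.univ (fun x : ℝ => max (x - a) 0) :=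
    ((convexOn_id convex_univ).sub (concaveOn_const a convex_univ)).sup
      (convexOn_const 0 convex_univ)
  have h2 := h.pow (fun x _ => le_max_right _ _) 2
  refine h2.congr fun x _ => ?_
  simp only [Pi.pow_apply]
  split_ifs with hx
  · rw [max_eq_left (by linarith)]
  · rw [max_eq_right (by linarith)]; ring

lemma convexOn_affine (b c : ℝ) : ConvexOn ℝ Set.univ (fun x : ℝ => b + c * x) := by
  refine ⟨convex_univ, fun x _ y _ s t _ _ hst => le_of_eq ?_⟩
  simp only [smul_eq_mul]
  linear_combination (-b) * hst

theorem stmt16 (δ : ℝ) (hδ0 : 0 < δ) (hδ : δ < 1 / 4)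
    (f1 f2 : ℝ → ℝ)
    (hf1 : f1 = fun x => 1 / 2 + δ - 2 * δ * x
      + (if x < 1 / 4 then (x - 1 / 4) ^ 2 else 0)
      + (if x > 3 / 4 then (x - 3 / 4) ^ 2 else 0))
    (hf2 : f2 = fun x => 1 / 2 - δ + 2 * δ * x
      + (if x < 1 / 4 then (x - 1 / 4) ^ 2 else 0)
      + (if x > 3 / 4 then (x - 3 / 4) ^ 2 else 0)) :
    (ConvexOn ℝ Set.univ f1 ∧ ConvexOn ℝ Set.univ f2) ∧
    ((∀ x ∈ Set.Icc (0 : ℝ) 1, |f1 x - f2 x| ≤ 2 * δ) ∧ |f1 0 - f2 0| = 2 * δ) ∧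
    ((3 / 4 + δ ∈ Set.Icc (0 : ℝ) 1 ∧ ∀ x ∈ Set.Icc (0 : ℝ) 1, f1 (3 / 4 + δ) ≤ f1 x) ∧
      (1 / 4 - δ ∈ Set.Icc (0 : ℝ) 1 ∧ ∀ x ∈ Set.Icc (0 : ℝ) 1, f2 (1 / 4 - δ) ≤ f2 x) ∧
      f1 (3 / 4 + δ) = 1 / 2 - δ / 2 - δ ^ 2 ∧
      f2 (1 / 4 - δ) = 1 / 2 - δ / 2 - δ ^ 2 ∧
      f1 (1 / 2) - f1 (3 / 4 + δ) = δ / 2 + δ ^ 2 ∧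
      f2 (1 / 2) - f2 (1 / 4 - δ) = δ / 2 + δ ^ 2 ∧
      δ / 4 ≤ δ / 2 + δ ^ 2) := by
  have v1 : f1 (3 / 4 + δ) = 1 / 2 - δ / 2 - δ ^ 2 := by
    simp only [hf1]
    rw [if_neg (by linarith), if_pos (by linarith)]; ring
  have v2 : f2 (1 / 4 - δ) = 1 / 2 - δ / 2 - δ ^ 2 := by
    simp only [hf2]
    rw [if_pos (by linarith), if_neg (by linarith)]; ring
  have m1 : f1 (1 / 2) = 1 / 2 := by
    simp only [hf1]
    rw [if_neg (by norm_num), if_neg (by norm_num)]; ring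
  have m2 : f2 (1 / 2) = 1 / 2 := by
    simp only [hf2]
    rw [if_neg (by norm_num), if_neg (by norm_num)]; ring
  have hd : ∀ x, f1 x - f2 x = 2 * δ * (1 - 2 * x) := by
    intro x
    simp only [hf1, hf2]; ring
  refine ⟨⟨?_, ?_⟩, ⟨?_, ?_⟩, ⟨⟨by linarith, by linarith⟩, ?_⟩,
    ⟨⟨by linarith, by linarith⟩, ?_⟩, v1, v2, ?_, ?_, ?_⟩
  · refine (((convexOn_affine (1 / 2 + δ) (-(2 * δ))).add (convexOn_sq_left (1 / 4))).add
      (convexOn_sq_right (3 / 4))).congr ?_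
    intro x _
    simp only [hf1, Pi.add_apply]; ring
  · refine (((convexOn_affine (1 / 2 - δ) (2 * δ)).add (convexOn_sq_left (1 / 4))).add
      (convexOn_sq_right (3 / 4))).congr ?_
    intro x _
    simp only [hf2, Pi.add_apply]
  · rintro x ⟨h0, h1⟩
    rw [hd, abs_le]
    constructor <;> nlinarith
  · rw [hd, abs_of_nonneg (by linarith)]; ring
  · rintro x -
    rw [v1]; simp only [hf1]
    split_ifs with h h' h'
    · linarith
    · nlinarith [sq_nonneg (x - 1 / 4)]
    · nlinarith [sq_nonneg (x - (3 / 4 + δ))]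
    · nlinarith
  · rintro x -
    rw [v2]; simp only [hf2]
    split_ifs with h h' h'
    · linarith
    · nlinarith [sq_nonneg (x - (1 / 4 - δ))]
    · nlinarith [sq_nonneg (x - 3 / 4)]
    · nlinarith
  · rw [m1, v1]; ring
  · rw [m2, v2]; ring
  · nlinarith
end
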